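/- If every word in W ∪ W_* has an embedding with respect to C (Cᵀ.mulVec w⃗_i = PMI_i), then ∑_{i∈W_*} w⃗_i = (∑_{i∈W} w⃗_i) + C†.mulVec( ρ^{W,W_*} + σ^W − σ^{W_*} − (τ^W − τ^{W_*})·𝟙 ). (Paper's Theorem 2: Generalised Paraphrase.) -/

import Mathlib

open MeasureTheory Real Finset Matrix

namespace AnalogiesExplained

variable {Ω : Type*}

/-- Conditional probability `p(B ∣ A) = μ(A ∩ B) / μ(A)` (as a real number). -/
noncomputable def condP [MeasurableSpace Ω] (μ : Measure Ω) (A B : Set Ω) : ℝ :=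
  (μ (A ∩ B)).toReal / (μ A).toReal

/-- Pointwise mutual information `PMI(A, B) = log (μ(A ∩ B) / (μ(A)·μ(B)))`. -/
noncomputable def PMI [MeasurableSpace Ω] (μ : Measure Ω) (A B : Set Ω) : ℝ :=
  Real.log ((μ (A ∩ B)).toReal / ((μ A).toReal * (μ B).toReal))

/-- The joint event of a finite word set: `A_W = ⋂ i ∈ W, A i`. -/
def jointEvent {ι : Type*} (A : ι → Set Ω) (W : Finset ι) : Set Ω :=
  ⋂ i ∈ W, A i

/-- Paraphrase error `ρ^{W,W*}_j = log (p(B_j ∣ A_{W*}) / p(B_j ∣ A_W))`. -/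
noncomputable def rho [MeasurableSpace Ω] (μ : Measure Ω) (AW AWstar B : Set Ω) : ℝ :=
  Real.log (condP μ AWstar B / condP μ AW B)

/-- Conditional-dependence error `σ^W_j = log (p(A_W ∣ B_j) / ∏_{i ∈ W} p(A_i ∣ B_j))`. -/
noncomputable def sigma [MeasurableSpace Ω] {ι : Type*} (μ : Measure Ω) (A : ι → Set Ω)
    (W : Finset ι) (B : Set Ω) : ℝ :=
  Real.log (condP μ B (jointEvent A W) / ∏ i ∈ W, condP μ B (A i))

/-- Marginal-dependence error `τ^W = log (μ(A_W) / ∏_{i ∈ W} μ(A_i))`. -/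
noncomputable def tau [MeasurableSpace Ω] {ι : Type*} (μ : Measure Ω) (A : ι → Set Ω)
    (W : Finset ι) : ℝ :=
  Real.log ((μ (jointEvent A W)).toReal / ∏ i ∈ W, (μ (A i)).toReal)

theorem sum_PMI_eq [MeasurableSpace Ω] (μ : Measure Ω) {ι : Type*} (A : ι → Set Ω)
    (W : Finset ι) (B : Set Ω)
    (hA : ∀ i ∈ W, 0 < (μ (A i)).toReal) (hB : 0 < (μ B).toReal)
    (hAW : 0 < (μ (jointEvent A W)).toReal)
    (hAB : ∀ i ∈ W, 0 < (μ (A i ∩ B)).toReal)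
    (hAWB : 0 < (μ (jointEvent A W ∩ B)).toReal) :
    ∑ i ∈ W, PMI μ (A i) B
      = Real.log (condP μ (jointEvent A W) B) - Real.log (μ B).toReal
        - sigma μ A W B + tau μ A W := by
  have hc : ∀ i ∈ W, 0 < condP μ B (A i) := fun i hi => by
    unfold condP
    rw [Set.inter_comm]
    exact div_pos (hAB i hi) hB
  have hcW : 0 < condP μ B (jointEvent A W) := by
    unfold condP
    rw [Set.inter_comm]
    exact div_pos hAWB hB
  have h1 : ∑ i ∈ W, PMI μ (A i) B
      = ∑ i ∈ W, (Real.log (condP μ B (A i)) - Real.log (μ (A i)).toReal) := by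
    refine Finset.sum_congr rfl fun i hi => ?_
    unfold PMI condP
    rw [Set.inter_comm B, Real.log_div (hAB i hi).ne' (mul_pos (hA i hi) hB).ne',
      Real.log_mul (hA i hi).ne' hB.ne', Real.log_div (hAB i hi).ne' hB.ne']
    ring
  rw [h1, Finset.sum_sub_distrib, sigma, tau,
    Real.log_div hcW.ne' (Finset.prod_pos hc).ne',
    Real.log_div hAW.ne' (Finset.prod_pos hA).ne',
    Real.log_prod (fun i hi => (hc i hi).ne'), Real.log_prod (fun i hi => (hA i hi).ne')]
  unfold condP
  rw [Set.inter_comm B (jointEvent A W), Real.log_div hAWB.ne' hB.ne',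
    Real.log_div hAWB.ne' hAW.ne']
  ring

/-- **Theorem 2 (Generalised Paraphrase).** If every word in `W ∪ W_*` has an embedding w.r.t.
`C`, then `∑_{i∈W_*} w⃗_i = (∑_{i∈W} w⃗_i) + C†(ρ^{W,W_*} + σ^W − σ^{W_*} − (τ^W − τ^{W_*})·𝟙)`. -/
theorem generalised_paraphrase_embedding
    [MeasurableSpace Ω] (μ : Measure Ω) [IsProbabilityMeasure μ]
    {ι : Type*} [DecidableEq ι] (A : ι → Set Ω) {n : ℕ} (B : Fin n → Set Ω)
    (W Wstar : Finset ι)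
    (hmA : ∀ i, MeasurableSet (A i)) (hmB : ∀ j, MeasurableSet (B j))
    (hA : ∀ i ∈ W ∪ Wstar, 0 < (μ (A i)).toReal)
    (hB : ∀ j, 0 < (μ (B j)).toReal)
    (hAW : 0 < (μ (jointEvent A W)).toReal)
    (hAWs : 0 < (μ (jointEvent A Wstar)).toReal)
    (hAB : ∀ i ∈ W ∪ Wstar, ∀ j, 0 < (μ (A i ∩ B j)).toReal)
    (hAWB : ∀ j, 0 < (μ (jointEvent A W ∩ B j)).toReal)
    (hAWsB : ∀ j, 0 < (μ (jointEvent A Wstar ∩ B j)).toReal)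
    {d : ℕ} (C : Matrix (Fin d) (Fin n) ℝ)
    (hC : IsUnit (C * C.transpose))
    (wv : ι → Fin d → ℝ)
    (hwi : ∀ i ∈ W ∪ Wstar, C.transpose.mulVec (wv i) = fun j => PMI μ (A i) (B j)) :
    (∑ i ∈ Wstar, wv i) = (∑ i ∈ W, wv i)
      + ((C * C.transpose)⁻¹ * C).mulVec
          (fun j => rho μ (jointEvent A W) (jointEvent A Wstar) (B j)
            + sigma μ A W (B j) - sigma μ A Wstar (B j)
            - (tau μ A W - tau μ A Wstar)) := by
  have key : (fun j => rho μ (jointEvent A W) (jointEvent A Wstar) (B j)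
            + sigma μ A W (B j) - sigma μ A Wstar (B j)
            - (tau μ A W - tau μ A Wstar))
      = C.transpose.mulVec (∑ i ∈ Wstar, wv i - ∑ i ∈ W, wv i) := by
    rw [Matrix.mulVec_sub, Matrix.mulVec_sum, Matrix.mulVec_sum,
      Finset.sum_congr rfl (fun i hi => hwi i (Finset.mem_union_right W hi)),
      Finset.sum_congr rfl (fun i hi => hwi i (Finset.mem_union_left Wstar hi))]
    funext j
    rw [Pi.sub_apply, Finset.sum_apply, Finset.sum_apply,
      sum_PMI_eq μ A W (B j) (fun i hi => hA i (Finset.mem_union_left _ hi)) (hB j) hAW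
        (fun i hi => hAB i (Finset.mem_union_left _ hi) j) (hAWB j),
      sum_PMI_eq μ A Wstar (B j) (fun i hi => hA i (Finset.mem_union_right _ hi)) (hB j) hAWs
        (fun i hi => hAB i (Finset.mem_union_right _ hi) j) (hAWsB j),
      rho, condP, condP, Real.log_div (div_pos (hAWsB j) hAWs).ne' (div_pos (hAWB j) hAW).ne']
    ring
  rw [key, Matrix.mulVec_mulVec, Matrix.mul_assoc,
    Matrix.nonsing_inv_mul _ ((Matrix.isUnit_iff_isUnit_det _).mp hC), Matrix.one_mulVec]
  abel

end AnalogiesExplained
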